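/- Let $G$ be a triangle-free simple graph on $n$ vertices with adjacency-matrix eigenvalues $\mu_1 \geq \mu_2 \geq \dots \geq \mu_n$. Then $\mu_1^2 \leq (-\mu_n)(n - \mu_1)$. -/

import Mathlib

open Matrix SimpleGraph

/-- Rayleigh quotient lower bound. -/
theorem rayleigh_lower {n : ℕ} {A : Matrix (Fin n) (Fin n) ℝ} (hA : A.IsHermitian) (l : ℝ)
    (hl : ∀ i, l ≤ hA.eigenvalues i) (z : Fin n → ℝ) :
    l * (z ⬝ᵥ z) ≤ z ⬝ᵥ (A *ᵥ z) := by
  have hd : (diagonal (fun i => hA.eigenvalues i - l) : Matrix (Fin n) (Fin n) ℝ).PosSemidef :=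
    posSemidef_diagonal_iff.2 fun i => sub_nonneg.2 (hl i)
  set U : Matrix (Fin n) (Fin n) ℝ := hA.eigenvectorUnitary.1 with hU
  have hUU : U * Uᴴ = 1 := Unitary.coe_mul_star_self hA.eigenvectorUnitary
  have hs : A = U * diagonal hA.eigenvalues * Uᴴ := by
    have := hA.spectral_theorem
    rw [Unitary.conjStarAlgAut_apply] at this
    exact this
  have hp := hd.mul_mul_conjTranspose_same U
  have he : U * diagonal (fun i => hA.eigenvalues i - l) * Uᴴ = A - l • 1 := by
    have : (diagonal (fun i => hA.eigenvalues i - l) : Matrix (Fin n) (Fin n) ℝ)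
        = diagonal hA.eigenvalues - l • 1 := by
      rw [smul_one_eq_diagonal, diagonal_sub]
    rw [this, mul_sub, sub_mul, ← hs]
    rw [mul_smul_comm, smul_mul_assoc, mul_one, hUU]
  rw [he] at hp
  have := hp.dotProduct_mulVec_nonneg z
  simp only [star_trivial, sub_mulVec, smul_mulVec, one_mulVec, dotProduct_sub, dotProduct_smul,
    smul_eq_mul] at this
  linarith

/-- The main inequality, for any unit eigenvector and any lower bound for the Rayleigh form. -/
theorem main_bound {n : ℕ} (G : SimpleGraph (Fin n)) [DecidableRel G.Adj]
    (hG : G.CliqueFree 3) (l m : ℝ)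
    (hR : ∀ z : Fin n → ℝ, l * (z ⬝ᵥ z) ≤ z ⬝ᵥ (G.adjMatrix ℝ *ᵥ z))
    (x : Fin n → ℝ) (hx : x ⬝ᵥ x = 1) (hAx : G.adjMatrix ℝ *ᵥ x = m • x) :
    m ^ 2 ≤ (-l) * ((n : ℝ) - m) := by
  have hlm : l ≤ m := by
    have := hR x
    rw [hAx, dotProduct_smul, hx] at this
    simpa using this
  set s : Fin n → ℝ := fun v => ∑ u, if G.Adj v u then x u ^ 2 else 0 with hs
  have hs0 : ∀ v, 0 ≤ s v := fun v => Finset.sum_nonneg fun u _ => by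
    split_ifs <;> positivity
  have hl0 : ∀ v : Fin n, 0 ≤ -l := fun v => by
    have := hR (Pi.single v 1)
    simp at this
    linarith
  have key : ∀ v, (m - l) * s v ≤ -l := by
    intro v
    rcases (hs0 v).eq_or_lt with h0 | h0
    · rw [← h0]; simpa using hl0 v
    set y : Fin n → ℝ := fun u => if G.Adj v u then x u else 0 with hy
    have hyy : y ⬝ᵥ y = s v := by
      simp only [dotProduct, hy, hs]
      exact Finset.sum_congr rfl fun u _ => by split_ifs <;> ring
    have hyx : y ⬝ᵥ x = s v := by
      simp only [dotProduct, hy, hs]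
      exact Finset.sum_congr rfl fun u _ => by split_ifs <;> ring
    have hyAy : y ⬝ᵥ (G.adjMatrix ℝ *ᵥ y) = 0 := by
      simp only [dotProduct, mulVec]
      refine Finset.sum_eq_zero fun i _ => ?_
      rw [Finset.mul_sum]
      refine Finset.sum_eq_zero fun j _ => ?_
      simp only [hy, adjMatrix_apply]
      by_cases h1 : G.Adj v i
      · by_cases h2 : G.Adj v j
        · by_cases h3 : G.Adj i j
          · exact absurd (is3Clique_triple_iff.2 ⟨h1, h2, h3⟩) (hG {v, i, j})
          · simp [h3]
        · simp [h2]
      · simp [h1]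
    have hxAy : x ⬝ᵥ (G.adjMatrix ℝ *ᵥ y) = m * s v := by
      rw [dotProduct_mulVec, ← mulVec_transpose, transpose_adjMatrix, hAx, smul_dotProduct,
        dotProduct_comm, hyx, smul_eq_mul]
    have := hR (y - s v • x)
    simp only [mulVec_sub, mulVec_smul, dotProduct_sub, sub_dotProduct, smul_dotProduct,
      dotProduct_smul, smul_eq_mul, hAx, hyy, hyx, hyAy, hxAy, hx, dotProduct_comm x y] at this
    have h2 : 0 ≤ s v * (-l - (m - l) * s v) := by nlinarith
    have := nonneg_of_mul_nonneg_right h2 h0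
    linarith
  have hsum : (m - l) * ∑ v, s v ≤ n * (-l) := by
    rw [Finset.mul_sum]
    calc _ ≤ ∑ v : Fin n, -l := Finset.sum_le_sum fun v _ => key v
      _ = _ := by simp
  have hm : m ≤ ∑ v, s v := by
    have h := (G.posSemidef_lapMatrix ℝ).dotProduct_mulVec_nonneg x
    simp only [star_trivial, lapMatrix, sub_mulVec, dotProduct_sub, dotProduct_mulVec_degMatrix,
      hAx, dotProduct_smul, hx, smul_eq_mul, mul_one] at h
    have : ∑ v, s v = ∑ i, G.degree i * x i * x i := by
      simp only [hs]
      rw [Finset.sum_comm]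
      refine Finset.sum_congr rfl fun u _ => ?_
      rw [degree_eq_sum_if_adj, mul_assoc, Finset.sum_mul]
      refine Finset.sum_congr rfl fun w _ => ?_
      simp only [G.adj_comm u w]
      split_ifs <;> ring
    linarith
  nlinarith [mul_le_mul_of_nonneg_left hm (sub_nonneg.2 hlm)]

/-- Let `G` be a triangle-free simple graph on `n` vertices with
adjacency-matrix eigenvalues `μ₁ ≥ ⋯ ≥ μₙ`. Then `μ₁² ≤ (-μₙ)(n - μ₁)`. -/
theorem triangle_free_eigenvalue_sq_bound
    (n : ℕ) (hn : 0 < n) (G : SimpleGraph (Fin n)) [DecidableRel G.Adj]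
    (hG : G.CliqueFree 3)
    (hA : (G.adjMatrix ℝ).IsHermitian)
    (μ : Fin n → ℝ) (hmono : Antitone μ)
    (hperm : ∃ σ : Equiv.Perm (Fin n), ∀ i, μ i = hA.eigenvalues (σ i)) :
    μ ⟨0, hn⟩ ^ 2 ≤ (-μ ⟨n - 1, by omega⟩) * ((n : ℝ) - μ ⟨0, hn⟩) := by
  obtain ⟨σ, hσ⟩ := hperm
  refine main_bound G hG _ _ (rayleigh_lower hA _ fun i => ?_)
    (hA.eigenvectorBasis (σ ⟨0, hn⟩)) ?_ ?_
  · have h := hσ (σ.symm i)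
    rw [Equiv.apply_symm_apply] at h
    rw [← h]
    apply hmono
    rw [Fin.le_def]
    have := (σ.symm i).2
    simp only
    omega
  · have h := hA.eigenvectorBasis.orthonormal.1 (σ ⟨0, hn⟩)
    have h2 := real_inner_self_eq_norm_sq (hA.eigenvectorBasis (σ ⟨0, hn⟩))
    rw [h, EuclideanSpace.inner_eq_star_dotProduct] at h2
    simpa using h2
  · rw [hσ]
    exact hA.mulVec_eigenvectorBasis _
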